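/- On the event Ω₁ = {inf_{t,t'≥0} λ_min((X(t)ᵀX(t)/n)_{A,A}) > 0, where A = Ŝ(t)∪Ŝ(t')}, almost surely, β̂(π/2) − β̂(0) = ∫₀^{π/2} D(t)ᵀ·ż₀(t) dt, where ż₀(t) = P_ε^⊥((−sin t)z₀ + (cos t)g) and D(t) ∈ ℝ^{n×p} is the matrix given by D_j(t) = 0 for j ∉ Ŝ(t) and D_{Ŝ(t)}(t)ᵀ = ((X(t)ᵀX(t))_{Ŝ(t),Ŝ(t)})⁻¹·[ (a₀)_{Ŝ(t)}·(ε − X(t)h(t))ᵀ − X_{Ŝ(t)}(t)ᵀ·⟨a₀, h(t)⟩ ]. -/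

import Mathlib

/-!
The identity holds pointwise on `Ω₁`; no exceptional null set is needed.

Fix a point of `Ω₁`. The design moves along a smooth rank-one path, the Lasso solutions are bounded
uniformly in `t` (`lasso_bound`), and the Lasso objective grows quadratically around its minimizer
(`lasso_growth`). Together with the uniform lower eigenvalue bound on the union of two active sets,
this makes `t ↦ β̂(t)` Lipschitz (`lasso_lipschitz`), hence absolutely continuous, so that
`β̂(π/2) - β̂(0)` is the integral of the almost everywhere defined derivative.

It remains to identify that derivative at almost every `t`. Since `|β̂_j|` is Lipschitz too, at almost
every `t` it is differentiable, and then `β̂_j(t) = 0` forces `β̂_j'(t) = 0` (`deriv_zero_of_abs`). For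
active coordinates, the sign of `β̂_j` is locally constant, so the stationarity condition
`x_j(s)ᵀ(ε - X(s)h(s)) / n = λ sgn β̂_j(s)` (`lasso_kkt`) has derivative zero at `t`. This is a linear
system for the active part of `β̂'(t)` whose matrix is the active Gram matrix, invertible on `Ω₁`;
solving it gives `D(t)ᵀ ż₀(t)` (`deriv_formula`).
-/

open MeasureTheory ProbabilityTheory Filter
open scoped ENNReal NNReal

noncomputable section

namespace BZ

/-- Euclidean (ℓ2) norm of a finite real vector. -/
def l2 {m : ℕ} (v : Fin m → ℝ) : ℝ := Real.sqrt (∑ i, (v i) ^ 2)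

/-- ℓ1 norm. -/
def l1 {m : ℕ} (v : Fin m → ℝ) : ℝ := ∑ i, |v i|

/-- Euclidean inner product. -/
def dot {m : ℕ} (a b : Fin m → ℝ) : ℝ := ∑ i, a i * b i

/-- Support of a vector, as a finset. -/
def suppF {m : ℕ} (v : Fin m → ℝ) : Finset (Fin m) := Finset.univ.filter fun i => v i ≠ 0

/-- ℓ0 "norm": number of nonzero coordinates. -/
def l0 {m : ℕ} (v : Fin m → ℝ) : ℕ := (suppF v).card

/-- ℓ∞ norm. -/
def linf {m : ℕ} (v : Fin m → ℝ) : ℝ := sSup (Set.range fun i => |v i|)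

/-- Sign function. -/
def sgn (x : ℝ) : ℝ := if 0 < x then 1 else if x < 0 then -1 else 0

/-- Matrix (given as a function) times a vector. -/
def mulVec' {n p : ℕ} (X : Fin n → Fin p → ℝ) (b : Fin p → ℝ) : Fin n → ℝ :=
  fun i => ∑ j, X i j * b j

/-- Transposed matrix times a vector: `Xᵀ r`. -/
def tmulVec {n p : ℕ} (X : Fin n → Fin p → ℝ) (r : Fin n → ℝ) : Fin p → ℝ :=
  fun j => ∑ i, X i j * r i

/-- Gram matrix `XᵀX`. -/
def gramOf {n p : ℕ} (X : Fin n → Fin p → ℝ) : Matrix (Fin p) (Fin p) ℝ :=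
  Matrix.of fun j k => ∑ i, X i j * X i k

/-- The Lasso objective `‖y - Xb‖₂²/(2n) + λ‖b‖₁`. -/
def lassoObj {n p : ℕ} (y : Fin n → ℝ) (X : Fin n → Fin p → ℝ) (lam : ℝ) (b : Fin p → ℝ) : ℝ :=
  (l2 (fun i => y i - mulVec' X b i)) ^ 2 / (2 * n) + lam * l1 b

/-- `bhat` is a Lasso solution. -/
def IsLasso {n p : ℕ} (y : Fin n → ℝ) (X : Fin n → Fin p → ℝ) (lam : ℝ) (bhat : Fin p → ℝ) :
    Prop :=
  ∀ b : Fin p → ℝ, lassoObj y X lam bhat ≤ lassoObj y X lam b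

/-- Quadratic form `vᵀ M v`. -/
def quadForm {m : ℕ} (M : Matrix (Fin m) (Fin m) ℝ) (v : Fin m → ℝ) : ℝ :=
  ∑ i, ∑ j, v i * M i j * v j

/-- Principal submatrix `M_{A,A}` indexed by a finset `A`. -/
def subMat {m : ℕ} (M : Matrix (Fin m) (Fin m) ℝ) (A : Finset (Fin m)) :
    Matrix {x // x ∈ A} {x // x ∈ A} ℝ := Matrix.of fun i j => M i.1 j.1

/-- Bilinear form `(u_A)ᵀ (M_{A,A})⁻¹ v_A`. -/
def subBilinInv {m : ℕ} (M : Matrix (Fin m) (Fin m) ℝ) (A : Finset (Fin m)) (u v : Fin m → ℝ) :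
    ℝ :=
  ∑ i : {x // x ∈ A}, ∑ j : {x // x ∈ A}, u i.1 * (subMat M A)⁻¹ i j * v j.1

/-- Smallest eigenvalue of `M_{A,A}` (Rayleigh quotient formulation). -/
def rayleighMin {m : ℕ} (M : Matrix (Fin m) (Fin m) ℝ) (A : Finset (Fin m)) : ℝ :=
  sInf {c | ∃ v : Fin m → ℝ, (∀ j ∉ A, v j = 0) ∧ l2 v = 1 ∧ c = quadForm M v}

/-- Largest eigenvalue of `M_{A,A}` (Rayleigh quotient formulation). -/
def rayleighMax {m : ℕ} (M : Matrix (Fin m) (Fin m) ℝ) (A : Finset (Fin m)) : ℝ :=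
  sSup {c | ∃ v : Fin m → ℝ, (∀ j ∉ A, v j = 0) ∧ l2 v = 1 ∧ c = quadForm M v}

/-- Sparse minimal eigenvalue `φ_min(m, B; M)`. -/
def phiMin {m : ℕ} (mm : ℕ) (B : Finset (Fin m)) (M : Matrix (Fin m) (Fin m) ℝ) : ℝ :=
  sInf {c | ∃ A : Finset (Fin m), (A \ B).card = mm ∧ c = rayleighMin M A}

/-- Sparse maximal eigenvalue `φ_max(m, B; M)`. -/
def phiMax {m : ℕ} (mm : ℕ) (B : Finset (Fin m)) (M : Matrix (Fin m) (Fin m) ℝ) : ℝ :=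
  sSup {c | ∃ A : Finset (Fin m), (A \ B).card = mm ∧ c = rayleighMax M A}

/-- Sparse condition number `φ_cond(m; B, M)`. -/
def phiCond {m : ℕ} (mm : ℕ) (B : Finset (Fin m)) (M : Matrix (Fin m) (Fin m) ℝ) : ℝ :=
  sSup {c | ∃ A : Finset (Fin m), (A \ B).card ≤ max 1 mm ∧ c = rayleighMax M A / rayleighMin M A}

/-- Operator (spectral) norm of a square matrix. -/
def opNormM {m : ℕ} (M : Matrix (Fin m) (Fin m) ℝ) : ℝ :=
  sSup {c | ∃ v : Fin m → ℝ, l2 v = 1 ∧ c = l2 (M.mulVec v)}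

/-- Operator norm of a rectangular matrix given as a function. -/
def opNormF {n p : ℕ} (M : Fin n → Fin p → ℝ) : ℝ :=
  sSup {c | ∃ v : Fin p → ℝ, l2 v = 1 ∧ c = l2 (mulVec' M v)}

section Prob

variable {Ω : Type*} [MeasureSpace Ω]

/-- `W n = O_P(a n)`. -/
def BigOP (W : ℕ → Ω → ℝ) (a : ℕ → ℝ) : Prop :=
  ∀ γ : ℝ, 0 < γ → ∃ K : ℝ, ∃ N : ℕ, ∀ n, N ≤ n →
    (volume {ω | K * a n < |W n ω|}).toReal ≤ γ

/-- `W n = o_P(1)`. -/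
def LittleOP (W : ℕ → Ω → ℝ) : Prop :=
  ∀ δ : ℝ, 0 < δ → Tendsto (fun n => (volume {ω | δ < |W n ω|}).toReal) atTop (nhds 0)

/-- `W n` is stochastically unbounded. -/
def StochUnbounded (W : ℕ → Ω → ℝ) : Prop :=
  ¬ ∀ γ : ℝ, 0 < γ → ∃ M : ℝ,
      Filter.limsup (fun n => (volume {ω | M < |W n ω|}).toReal) atTop ≤ γ

/-- Convergence in distribution to the standard normal law (via CDFs). -/
def TendstoNormal (Z : ℕ → Ω → ℝ) : Prop :=
  ∀ t : ℝ, Tendsto (fun n => (volume {ω | Z n ω ≤ t}).toReal) atTop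
    (nhds ((gaussianReal 0 1 (Set.Iic t)).toReal))

/-- `e : Ω → ℝⁿ` is a centered Gaussian vector with covariance `v · I_n`. -/
def IsoGaussVec (nn : ℕ) (v : ℝ) (e : Ω → Fin nn → ℝ) : Prop :=
  Measurable e ∧
    Measure.map e volume = Measure.pi (fun _ : Fin nn => gaussianReal 0 (Real.toNNReal v))

/-- Gaussian noise `N(0, σ² I_n)`. -/
def GaussNoise (nn : ℕ) (σ : ℝ) (e : Ω → Fin nn → ℝ) : Prop := IsoGaussVec nn (σ ^ 2) e

/-- Design matrix with i.i.d. `N(0, Sig)` rows. -/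
def GaussDesign (nn pp : ℕ) (Sig : Matrix (Fin pp) (Fin pp) ℝ)
    (X : Ω → Fin nn → Fin pp → ℝ) : Prop :=
  Measurable X ∧ ∃ A : Matrix (Fin pp) (Fin pp) ℝ, A.transpose * A = Sig ∧
    Measure.map X volume =
      Measure.map (fun (G : Fin nn → Fin pp → ℝ) (i : Fin nn) (j : Fin pp) => ∑ l, G i l * A l j)
        (Measure.pi fun _ : Fin nn => Measure.pi fun _ : Fin pp => gaussianReal 0 1)

end Prob

/-- `⟨a₀, Σ⁻¹ a₀⟩`. -/
def quadA0 {p : ℕ} (Sig : Matrix (Fin p) (Fin p) ℝ) (a0 : Fin p → ℝ) : ℝ :=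
  dot a0 (Matrix.mulVec Sig⁻¹ a0)

/-- `C₀ = ‖Σ^{-1/2} a₀‖₂`. -/
def C0 {p : ℕ} (Sig : Matrix (Fin p) (Fin p) ℝ) (a0 : Fin p → ℝ) : ℝ :=
  Real.sqrt (quadA0 Sig a0)

/-- Fisher information `F_θ = 1/(σ² ⟨a₀, Σ⁻¹ a₀⟩)`. -/
def Fisher {p : ℕ} (σ : ℝ) (Sig : Matrix (Fin p) (Fin p) ℝ) (a0 : Fin p → ℝ) : ℝ :=
  1 / (σ ^ 2 * quadA0 Sig a0)

/-- Least favorable direction `u₀ = Σ⁻¹a₀/⟨a₀,Σ⁻¹a₀⟩`. -/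
def u0vec {p : ℕ} (Sig : Matrix (Fin p) (Fin p) ℝ) (a0 : Fin p → ℝ) : Fin p → ℝ :=
  fun j => Matrix.mulVec Sig⁻¹ a0 j / quadA0 Sig a0

/-- Ideal score vector `z₀ = X u₀`. -/
def z0vec {n p : ℕ} (X : Fin n → Fin p → ℝ) (Sig : Matrix (Fin p) (Fin p) ℝ)
    (a0 : Fin p → ℝ) : Fin n → ℝ := mulVec' X (u0vec Sig a0)

/-- Residual vector `y - X bhat` where `y = Xβ + ε`. -/
def residOf {n p : ℕ} (X : Fin n → Fin p → ℝ) (e : Fin n → ℝ) (β bhat : Fin p → ℝ) :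
    Fin n → ℝ := fun i => mulVec' X β i + e i - mulVec' X bhat i

/-- Degrees-of-freedom adjusted LDPE. -/
def thetaHat {p : ℕ} (nn : ℕ) (a0 bhat : Fin p → ℝ) (z0 r : Fin nn → ℝ) (ν : ℝ) : ℝ :=
  dot a0 bhat + dot z0 r / ((l2 z0) ^ 2 * (1 - ν / nn))

/-- De-biased estimate based on an estimated score vector `zhat`. -/
def thetaHatZ {p : ℕ} (nn : ℕ) (a0 bhat : Fin p → ℝ) (zhat z r : Fin nn → ℝ) (ν : ℝ) : ℝ :=
  dot a0 bhat + dot zhat r / ((1 - ν / nn) * dot zhat z)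

/-- `T_n = √(n F_θ) ⟨z₀, ε⟩ / ‖z₀‖₂²`. -/
def Tstat (nn : ℕ) (F : ℝ) (z0 e : Fin nn → ℝ) : ℝ :=
  Real.sqrt (nn * F) * dot z0 e / (l2 z0) ^ 2

/-- `√(n F_θ)(1 - ν/n)(θ̂_ν - θ)`. -/
def pivot {p : ℕ} (n : ℕ) (σ : ℝ) (Sig : Matrix (Fin p) (Fin p) ℝ) (a0 β bhat : Fin p → ℝ)
    (Xω : Fin n → Fin p → ℝ) (eω : Fin n → ℝ) (ν : ℝ) : ℝ :=
  Real.sqrt ((n : ℝ) * Fisher σ Sig a0) * (1 - ν / n) *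
    (thetaHat n a0 bhat (z0vec Xω Sig a0) (residOf Xω eω β bhat) ν - dot a0 β)

/-- The statistic `T_n` of the model. -/
def TofModel {p : ℕ} (n : ℕ) (σ : ℝ) (Sig : Matrix (Fin p) (Fin p) ℝ) (a0 : Fin p → ℝ)
    (Xω : Fin n → Fin p → ℝ) (eω : Fin n → ℝ) : ℝ :=
  Tstat n (Fisher σ Sig a0) (z0vec Xω Sig a0) eω

/-- `λ₀ = √((2/n) log(8p/k))`. -/
def lam0 (nn pp kk : ℕ) : ℝ := Real.sqrt ((2 / (nn : ℝ)) * Real.log (8 * (pp : ℝ) / kk))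

/-- `λ_univ = √((2/n) log p)`. -/
def lamUniv (nn pp : ℕ) : ℝ := Real.sqrt ((2 / (nn : ℝ)) * Real.log (pp : ℝ))

def tauStar (e1 e2 : ℝ) : ℝ := (1 - e1 - e2) ^ 2
def tauUp (e1 e2 : ℝ) : ℝ := (1 + e1 + e2) ^ 2

/-- Projection of `v` onto the span of `e`. -/
def projOn {n : ℕ} (e v : Fin n → ℝ) : Fin n → ℝ := fun i => (dot e v / (l2 e) ^ 2) * e i

/-- Projection of `v` onto the orthogonal complement of `e`. -/
def projPerp {n : ℕ} (e v : Fin n → ℝ) : Fin n → ℝ := fun i => v i - projOn e v i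

/-- The interpolation path `z₀(t)`. -/
def z0Path {n : ℕ} (e z0 g : Fin n → ℝ) (t : ℝ) : Fin n → ℝ :=
  fun i => projOn e z0 i + Real.cos t * projPerp e z0 i + Real.sin t * projPerp e g i

/-- `ż₀(t)`. -/
def zdotPath {n : ℕ} (e z0 g : Fin n → ℝ) (t : ℝ) : Fin n → ℝ :=
  fun i => -Real.sin t * projPerp e z0 i + Real.cos t * projPerp e g i

/-- The interpolated design `X(t) = XQ₀ + z₀(t)a₀ᵀ`. -/
def XPath {n p : ℕ} (X : Fin n → Fin p → ℝ) (Sig : Matrix (Fin p) (Fin p) ℝ) (a0 : Fin p → ℝ)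
    (e g : Fin n → ℝ) (t : ℝ) : Fin n → Fin p → ℝ :=
  fun i j => (X i j - z0vec X Sig a0 i * a0 j) + z0Path e (z0vec X Sig a0) g t i * a0 j

/-- Assumption M. -/
structure AssumptionM (nn pp mm kk : ℕ) (ρs η2 η3 e1 e2 e3 e4 σ lam : ℝ)
    (Sig : Matrix (Fin pp) (Fin pp) ℝ) (S : Finset (Fin pp)) : Prop where
  hn : 0 < nn
  hp : 0 < pp
  hm : 0 < mm
  hk : 0 < kk
  hρ : 0 < ρs
  hη2 : η2 ∈ Set.Ioo (0 : ℝ) 1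
  hη3 : η3 ∈ Set.Ioo (0 : ℝ) 1
  he1 : 0 < e1
  he2 : 0 < e2
  he3 : 0 < e3
  he4 : 0 < e4
  hσ : 0 < σ
  hdiag : ∀ j, Sig j j ≤ 1
  hlam : lam = η2⁻¹ * (1 + η3) * σ * lam0 nn pp kk
  hSRC : ((S.card : ℝ) + kk) <
      (1 - η2) ^ 2 * (2 * mm) /
        ((1 + η2) ^ 2 * ((tauUp e1 e2 / tauStar e1 e2) * phiCond (mm + kk) S Sig - 1))
  hphimin : ρs ≤ phiMin (mm + kk) S Sig
  hlam0s : lam0 nn pp kk * Real.sqrt ((S.card : ℝ) + mm + kk) ≤ 1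
  hrank : 2 * (mm + kk) + S.card + 1 ≤ min (nn - 1) (pp + 1)
  he12 : e1 + e2 < 1
  he34 : e3 + e4 = e2 ^ 2 / 8
  hsize1 : S.card + mm + kk + 1 ≤ pp + 1
  hsize2 : ((S.card + mm + kk + 1 : ℕ) : ℝ) ≤ e1 ^ 2 * nn / 2
  hbinom : Real.log (Nat.choose (pp - S.card) (mm + kk)) ≤ e3 * nn

/-- The unknown-Σ construction: `u = e_{j₀}/(a₀)_{j₀}`. -/
def uvecOf {p : ℕ} (a0 : Fin p → ℝ) (j0 : Fin p) : Fin p → ℝ :=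
  fun j => if j = j0 then (a0 j0)⁻¹ else 0

/-- `Qb = b - u ⟨a₀, b⟩` where `Q = I - u a₀ᵀ`. -/
def Qvec {p : ℕ} (a0 : Fin p → ℝ) (j0 : Fin p) (b : Fin p → ℝ) : Fin p → ℝ :=
  fun j => b j - uvecOf a0 j0 j * dot a0 b

/-- `XQ`. -/
def XQmat {n p : ℕ} (X : Fin n → Fin p → ℝ) (a0 : Fin p → ℝ) (j0 : Fin p) :
    Fin n → Fin p → ℝ :=
  fun i j => X i j - mulVec' X (uvecOf a0 j0) i * a0 j

/-- `z = Xu`. -/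
def zOf {n p : ℕ} (X : Fin n → Fin p → ℝ) (a0 : Fin p → ℝ) (j0 : Fin p) : Fin n → ℝ :=
  mulVec' X (uvecOf a0 j0)

/-- `γ = -Q u₀`. -/
def gammaOf {p : ℕ} (Sig : Matrix (Fin p) (Fin p) ℝ) (a0 : Fin p → ℝ) (j0 : Fin p) :
    Fin p → ℝ :=
  fun j => -(Qvec a0 j0 (u0vec Sig a0) j)

/-- Estimated score vector `ẑ = z - XQ γ̂`. -/
def zhatOf {n p : ℕ} (X : Fin n → Fin p → ℝ) (a0 : Fin p → ℝ) (j0 : Fin p)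
    (ghat : Fin p → ℝ) : Fin n → ℝ :=
  fun i => zOf X a0 j0 i - mulVec' (XQmat X a0 j0) ghat i

section Events

variable {Ω : Type*}

/-- The event `Ω₁`. -/
def OmegaOne {n p : ℕ} (X : Ω → Fin n → Fin p → ℝ) (Sig : Matrix (Fin p) (Fin p) ℝ)
    (a0 : Fin p → ℝ) (eps g : Ω → Fin n → ℝ) (bpath : ℝ → Ω → Fin p → ℝ) : Set Ω :=
  {ω | ∃ c : ℝ, 0 < c ∧ ∀ t, 0 ≤ t → ∀ t', 0 ≤ t' →
      c ≤ rayleighMin ((n : ℝ)⁻¹ • gramOf (XPath (X ω) Sig a0 (eps ω) (g ω) t))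
            (suppF (bpath t ω) ∪ suppF (bpath t' ω))}

/-- The event `Ω₂`. -/
def OmegaTwo {n p : ℕ} (X : Ω → Fin n → Fin p → ℝ) (Sig : Matrix (Fin p) (Fin p) ℝ)
    (a0 β : Fin p → ℝ) (eps g : Ω → Fin n → ℝ) (bpath bnl : ℝ → Ω → Fin p → ℝ)
    (σ lam0v M1 M2 M3 M4 M5 : ℝ) (sstar s0k : ℕ) : Set Ω :=
  {ω | ∀ t, 0 ≤ t →
      l2 (mulVec' (XPath (X ω) Sig a0 (eps ω) (g ω) t) (fun j => bpath t ω j - β j))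
          ≤ M1 * Real.sqrt ((n : ℝ) * sstar) * σ * lam0v ∧
      l2 (mulVec' (XPath (X ω) Sig a0 (eps ω) (g ω) t) (fun j => bnl t ω j - β j))
          ≤ M1 * Real.sqrt ((n : ℝ) * sstar) * σ * lam0v ∧
      Real.sqrt (quadForm Sig (fun j => bpath t ω j - β j))
          ≤ M2 * Real.sqrt (sstar : ℝ) * σ * lam0v ∧
      ((suppF (bpath t ω)).card ≤ sstar ∧ (sstar : ℝ) ≤ M3 * s0k) ∧
      (∀ w : Fin p → ℝ,
        subBilinInv ((n : ℝ)⁻¹ • gramOf (XPath (X ω) Sig a0 (eps ω) (g ω) t))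
            (suppF (bpath t ω)) w w
          ≤ M4 * subBilinInv Sig (suppF (bpath t ω)) w w) ∧
      max (max (l2 (eps ω) / σ)
            (C0 Sig a0 * l2 (z0Path (eps ω) (z0vec (X ω) Sig a0) (g ω) t)))
          ((n : ℝ) / (C0 Sig a0 * l2 (z0Path (eps ω) (z0vec (X ω) Sig a0) (g ω) t)))
        ≤ M5 * Real.sqrt (n : ℝ)}

/-- `Rem_I`. -/
def RemI {n p : ℕ} (σ : ℝ) (Sig : Matrix (Fin p) (Fin p) ℝ) (a0 β : Fin p → ℝ)
    (X : Ω → Fin n → Fin p → ℝ) (eps : Ω → Fin n → ℝ) (bpath : ℝ → Ω → Fin p → ℝ) (ω : Ω) :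
    ℝ :=
  pivot n σ Sig a0 β (bpath 0 ω) (X ω) (eps ω) 0 - TofModel n σ Sig a0 (X ω) (eps ω)
    - Real.sqrt (Fisher σ Sig a0 / n) *
        ∫ t in (0 : ℝ)..(Real.pi / 2),
          Real.sin t * ((suppF (bpath t ω)).card : ℝ) * dot a0 (fun j => bpath t ω j - β j)

/-- `Rem_II`. -/
def RemII {n p : ℕ} (σ : ℝ) (Sig : Matrix (Fin p) (Fin p) ℝ) (a0 β : Fin p → ℝ)
    (X : Ω → Fin n → Fin p → ℝ) (eps : Ω → Fin n → ℝ) (bpath : ℝ → Ω → Fin p → ℝ) (ω : Ω) :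
    ℝ :=
  pivot n σ Sig a0 β (bpath 0 ω) (X ω) (eps ω) 0 - TofModel n σ Sig a0 (X ω) (eps ω)
    - Real.sqrt (Fisher σ Sig a0 / n) * dot a0 (fun j => bpath 0 ω j - β j) *
        ∫ t in (0 : ℝ)..(Real.pi / 2), Real.sin t * ((suppF (bpath t ω)).card : ℝ)

end Events

/-- The matrix `D(t)` from the gradient formula of the Lasso path. -/
def DmatOf {n p : ℕ} (Xt : Fin n → Fin p → ℝ) (a0 β : Fin p → ℝ) (e : Fin n → ℝ)
    (bt : Fin p → ℝ) : Fin n → Fin p → ℝ :=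
  fun i j =>
    if hj : j ∈ suppF bt then
      ∑ b : {x // x ∈ suppF bt},
        (subMat (gramOf Xt) (suppF bt))⁻¹ ⟨j, hj⟩ b *
          (a0 b.1 * (e i - mulVec' Xt (fun j' => bt j' - β j') i)
            - Xt i b.1 * dot a0 (fun j' => bt j' - β j'))
    else 0

/-- The set `U₀(S̄, Σ̄, η₁, η₂)`. -/
def U0set {p : ℕ} (S : Finset (Fin p)) (Sig : Matrix (Fin p) (Fin p) ℝ) (η1 η2 : ℝ) :
    Set (Fin p → ℝ) :=
  {u | (∀ j ∉ S, abs (u j * Matrix.mulVec Sig u j + |u j|) ≤ η2 * |u j|) ∧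
    Real.sqrt (∑ j ∈ S, (Matrix.mulVec Sig u j) ^ 2) ≤ (1 + η1) * Real.sqrt (S.card : ℝ)}

/-- The Rademacher (symmetric random sign) law on ℝ. -/
def radLaw : Measure ℝ := (2 : ℝ≥0∞)⁻¹ • Measure.dirac 1 + (2 : ℝ≥0∞)⁻¹ • Measure.dirac (-1)

/-- A mean-zero, unit-variance law on ℝ with subgaussian norm at most `K`. -/
def SubgLaw (μ : Measure ℝ) (K : ℝ) : Prop :=
  IsProbabilityMeasure μ ∧ (∫ x, x ∂μ) = 0 ∧ (∫ x, x ^ 2 ∂μ) = 1 ∧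
    (∫ x, Real.exp (x ^ 2 / K ^ 2) ∂μ) ≤ 2

/-- `h` is a norm on `ℝᵖ`. -/
def IsNorm {p : ℕ} (h : (Fin p → ℝ) → ℝ) : Prop :=
  (∀ b, h b = 0 ↔ b = 0) ∧ (∀ (c : ℝ) (b : Fin p → ℝ), h (c • b) = |c| * h b) ∧
    ∀ a b : Fin p → ℝ, h (a + b) ≤ h a + h b

end BZ

namespace BZ

/-! ### Gram matrices and restricted eigenvalues -/

lemma l2_sq {m : ℕ} (v : Fin m → ℝ) : (l2 v) ^ 2 = ∑ i, (v i) ^ 2 :=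
  Real.sq_sqrt (Finset.sum_nonneg fun _ _ => sq_nonneg _)

lemma quadForm_gram {n p : ℕ} (X : Fin n → Fin p → ℝ) (v : Fin p → ℝ) (c : ℝ) :
    quadForm (c • gramOf X) v = c * ∑ i, (mulVec' X v i) ^ 2 := by
  simp only [quadForm, gramOf, mulVec', Matrix.smul_apply, Matrix.of_apply, smul_eq_mul, sq,
    Finset.mul_sum, Finset.sum_mul]
  rw [Finset.sum_comm_cycle]
  refine Finset.sum_congr rfl fun i _ => ?_
  rw [Finset.sum_comm]
  refine Finset.sum_congr rfl fun j _ => Finset.sum_congr rfl fun k _ => ?_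
  ring

/-- A lower bound on `rayleighMin` is a restricted eigenvalue bound: the infimum is over a
set bounded below by `0`, and a general vector is reduced to unit length by scaling. -/
lemma rayleigh_lower {n p : ℕ} (X : Fin n → Fin p → ℝ) (A : Finset (Fin p)) (c : ℝ)
    (hc : c ≤ rayleighMin ((n : ℝ)⁻¹ • gramOf X) A) (v : Fin p → ℝ) (hv : ∀ j ∉ A, v j = 0) :
    c * ∑ j, (v j) ^ 2 ≤ (n : ℝ)⁻¹ * ∑ i, (mulVec' X v i) ^ 2 := by
  by_cases h0 : l2 v = 0
  · rw [← l2_sq v, h0]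
    have : (0 : ℝ) ≤ (n : ℝ)⁻¹ * ∑ i, (mulVec' X v i) ^ 2 := by positivity
    simpa using this
  have hpos : 0 < l2 v := lt_of_le_of_ne (Real.sqrt_nonneg _) (Ne.symm h0)
  have hbdd : BddBelow {c | ∃ v : Fin p → ℝ, (∀ j ∉ A, v j = 0) ∧ l2 v = 1 ∧
      c = quadForm ((n : ℝ)⁻¹ • gramOf X) v} := by
    refine ⟨0, ?_⟩
    rintro _ ⟨w, -, -, rfl⟩
    rw [quadForm_gram]
    positivity
  have key : c ≤ quadForm ((n : ℝ)⁻¹ • gramOf X) (fun j => (l2 v)⁻¹ * v j) := by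
    refine hc.trans (csInf_le hbdd ⟨_, fun j hj => by simp [hv j hj], ?_, rfl⟩)
    have h1 : (l2 (fun j => (l2 v)⁻¹ * v j)) ^ 2 = 1 := by
      rw [l2_sq]
      simp only [mul_pow, ← Finset.mul_sum]
      rw [← l2_sq]
      field_simp
    have h2 : 0 ≤ l2 (fun j => (l2 v)⁻¹ * v j) := Real.sqrt_nonneg _
    nlinarith
  rw [quadForm_gram] at key
  have h3 : ∀ i, mulVec' X (fun j => (l2 v)⁻¹ * v j) i = (l2 v)⁻¹ * mulVec' X v i := by
    intro i
    simp only [mulVec', Finset.mul_sum]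
    exact Finset.sum_congr rfl fun j _ => by ring
  simp only [h3, mul_pow, ← Finset.mul_sum] at key
  rw [← l2_sq v]
  calc c * l2 v ^ 2 ≤ (↑n)⁻¹ * ((l2 v)⁻¹ ^ 2 * ∑ i, mulVec' X v i ^ 2) * l2 v ^ 2 := by gcongr
    _ = _ := by field_simp

/-! ### Lasso minimizers for a fixed design -/

/-- Quadratic growth of the Lasso objective around a minimizer, obtained by comparing the
minimizer with the midpoint of `b` and `v`. -/
lemma lasso_growth {n p : ℕ} {y : Fin n → ℝ} {X : Fin n → Fin p → ℝ} {lam : ℝ} (hlam : 0 ≤ lam)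
    {b : Fin p → ℝ} (hb : IsLasso y X lam b) (v : Fin p → ℝ) :
    (n : ℝ)⁻¹ * ∑ i, (mulVec' X (fun j => v j - b j) i) ^ 2
      ≤ 4 * (lassoObj y X lam v - lassoObj y X lam b) := by
  have h := hb (fun j => (b j + v j) / 2)
  have hl : l1 (fun j => (b j + v j) / 2) ≤ (l1 b + l1 v) / 2 := by
    simp only [l1, ← Finset.sum_add_distrib, Finset.sum_div]
    refine Finset.sum_le_sum fun j _ => ?_
    rw [abs_div, abs_two]
    gcongr
    exact abs_add_le _ _
  have hm : ∀ i, mulVec' X (fun j => (b j + v j) / 2) i = (mulVec' X b i + mulVec' X v i) / 2 := by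
    intro i
    simp only [mulVec', ← Finset.sum_add_distrib, Finset.sum_div]
    exact Finset.sum_congr rfl fun j _ => by ring
  have hd : ∀ i, mulVec' X (fun j => v j - b j) i = mulVec' X v i - mulVec' X b i := by
    intro i
    simp only [mulVec', ← Finset.sum_sub_distrib]
    exact Finset.sum_congr rfl fun j _ => by ring
  have hq : ∑ i, (y i - mulVec' X (fun j => (b j + v j) / 2) i) ^ 2
      = (∑ i, (y i - mulVec' X b i) ^ 2) / 2 + (∑ i, (y i - mulVec' X v i) ^ 2) / 2
        - (∑ i, (mulVec' X (fun j => v j - b j) i) ^ 2) / 4 := by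
    simp only [Finset.sum_div, ← Finset.sum_add_distrib, ← Finset.sum_sub_distrib]
    refine Finset.sum_congr rfl fun i _ => ?_
    rw [hm, hd]
    ring
  unfold lassoObj at h ⊢
  simp only [l2_sq] at h ⊢
  rw [hq] at h
  have hl' := mul_le_mul_of_nonneg_left hl hlam
  have e : ∀ x : ℝ, x / (2 * n) = (n : ℝ)⁻¹ * x / 2 := by
    intro x; rw [div_eq_mul_inv, mul_inv]; ring
  simp only [e] at h ⊢
  nlinarith

/-- The stationarity condition of the Lasso in an active coordinate. -/
lemma lasso_kkt {n p : ℕ} {y : Fin n → ℝ} {X : Fin n → Fin p → ℝ} {lam : ℝ}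
    {b : Fin p → ℝ} (hb : IsLasso y X lam b) {j : Fin p} (hj : b j ≠ 0) :
    (n : ℝ)⁻¹ * ∑ i, X i j * (y i - mulVec' X b i) = lam * (SignType.sign (b j) : ℝ) := by
  set F : ℝ → ℝ := fun τ => (∑ i, (y i - mulVec' X b i - τ * X i j) ^ 2) / (2 * n)
    + lam * (∑ k ∈ Finset.univ.erase j, |b k| + |b j + τ|) with hF
  have hFe : ∀ τ, F τ = lassoObj y X lam (fun k => b k + if k = j then τ else 0) := by
    intro τ
    have h1 : ∀ i, mulVec' X (fun k => b k + if k = j then τ else 0) i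
        = mulVec' X b i + τ * X i j := by
      intro i
      simp [mulVec', mul_add, Finset.sum_add_distrib, mul_comm]
    have h2 : l1 (fun k => b k + if k = j then τ else 0)
        = ∑ k ∈ Finset.univ.erase j, |b k| + |b j + τ| := by
      rw [l1, ← Finset.sum_erase_add _ _ (Finset.mem_univ j)]
      simp only [if_true]
      congr 1
      refine Finset.sum_congr rfl fun k hk => ?_
      simp [Finset.ne_of_mem_erase hk]
    simp only [hF, lassoObj, l2_sq, h1, h2, sub_sub]
  have hmin : IsLocalMin F 0 := by
    refine Filter.Eventually.of_forall fun τ => ?_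
    have h0 : F 0 = lassoObj y X lam b := by rw [hFe]; simp
    rw [h0, hFe]
    exact hb _
  have hd1 : HasDerivAt (fun τ : ℝ => ∑ i, (y i - mulVec' X b i - τ * X i j) ^ 2)
      (∑ i, (-2) * (X i j * (y i - mulVec' X b i))) 0 := by
    refine HasDerivAt.fun_sum fun i _ => ?_
    have := (((hasDerivAt_id (0 : ℝ)).mul_const (X i j)).const_sub (y i - mulVec' X b i)).pow 2
    convert! this using 1
    simp; ring
  have hd2 : HasDerivAt (fun τ : ℝ => |b j + τ|) (SignType.sign (b j) : ℝ) 0 := by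
    have h : HasDerivAt (fun x : ℝ => |x|) (SignType.sign (b j + 0) : ℝ) (b j + 0) :=
      hasDerivAt_abs (by simpa using hj)
    have := h.comp (0 : ℝ) ((hasDerivAt_id (0 : ℝ)).const_add (b j))
    simpa using! this
  have hd := (hd1.div_const (2 * (n : ℝ))).add
    ((hd2.const_add (∑ k ∈ Finset.univ.erase j, |b k|)).const_mul lam)
  have := hmin.hasDerivAt_eq_zero hd
  rw [← Finset.mul_sum, div_eq_mul_inv, mul_inv] at this
  linarith

/-- All Lasso solutions are bounded by a constant independent of the design, by comparison of the
objective with its value at the true coefficient vector. -/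
lemma lasso_bound {n p : ℕ} {e : Fin n → ℝ} {X : Fin n → Fin p → ℝ} {lam : ℝ} (hlam : 0 < lam)
    {β b : Fin p → ℝ} (hb : IsLasso (fun i => e i + mulVec' X β i) X lam b) :
    ‖b‖ ≤ (l2 e ^ 2 / (2 * n) + lam * l1 β) / lam := by
  have h := hb β
  have h1 : lassoObj (fun i => e i + mulVec' X β i) X lam β = l2 e ^ 2 / (2 * n) + lam * l1 β := by
    simp [lassoObj]
  rw [h1] at h
  have h2 : lam * l1 b ≤ lassoObj (fun i => e i + mulVec' X β i) X lam b := by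
    unfold lassoObj
    have : 0 ≤ l2 (fun i => e i + mulVec' X β i - mulVec' X b i) ^ 2 / (2 * (n : ℝ)) := by
      positivity
    linarith
  have h3 : ‖b‖ ≤ l1 b := by
    refine (pi_norm_le_iff_of_nonneg (Finset.sum_nonneg fun _ _ => abs_nonneg _)).2 fun j => ?_
    exact Finset.single_le_sum (f := fun j => |b j|) (fun _ _ => abs_nonneg _) (Finset.mem_univ j)
  rw [le_div_iff₀ hlam]
  nlinarith

/-! ### Lipschitz continuity along the path -/

/-- A rank-one moving design `M + z(t) a₀ᵀ` with `z` bounded and Lipschitz: Lasso solutions that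
satisfy a uniform restricted eigenvalue bound are Lipschitz in `t`. The objectives at two times
differ by a smooth function of the coefficients whose increments are `O(|t - t'| ‖b - b'‖)`, while
quadratic growth bounds `‖b - b'‖²` from above by such an increment. -/
lemma lasso_lipschitz {n p : ℕ} (M : Fin n → Fin p → ℝ) (z : ℝ → Fin n → ℝ) (a0 β : Fin p → ℝ)
    (e : Fin n → ℝ) {lam : ℝ} (hlam : 0 < lam) (b : ℝ → Fin p → ℝ) (Z B : ℝ)
    (hB0 : 0 ≤ B) (hZ0 : 0 ≤ Z)
    (hZ : ∀ s t i, |z s i - z t i| ≤ Z * |s - t|) (hB : ∀ t i, |z t i| ≤ B)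
    (Xt : ℝ → Fin n → Fin p → ℝ) (hXt : ∀ t i j, Xt t i j = M i j + z t i * a0 j)
    (hb : ∀ t, IsLasso (fun i => e i + mulVec' (Xt t) β i) (Xt t) lam (b t))
    (c : ℝ) (hc : 0 < c)
    (hray : ∀ t, 0 ≤ t → ∀ t', 0 ≤ t' →
      c ≤ rayleighMin ((n : ℝ)⁻¹ • gramOf (Xt t)) (suppF (b t) ∪ suppF (b t'))) :
    ∃ C : ℝ≥0, LipschitzOnWith C b (Set.Ici 0) := by
  set R := (l2 e ^ 2 / (2 * n) + lam * l1 β) / lam with hR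
  set k : (Fin p → ℝ) → ℝ := fun v => dot a0 (fun j => v j - β j) with hk
  set q : Fin n → (Fin p → ℝ) → ℝ := fun i v => e i - ∑ j, M i j * (v j - β j) with hq
  have hkC : ContDiff ℝ 1 k := by
    simp only [hk, dot]; fun_prop
  have hqC : ∀ i, ContDiff ℝ 1 (q i) := by
    intro i; simp only [hq]; fun_prop
  have hlip : ∀ f : (Fin p → ℝ) → ℝ, ContDiff ℝ 1 f →
      ∃ L : ℝ≥0, LipschitzOnWith L f (Metric.closedBall 0 R) := fun f hf =>
    LocallyLipschitzOn.exists_lipschitzOnWith_of_compact (isCompact_closedBall _ _)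
      hf.locallyLipschitz.locallyLipschitzOn
  obtain ⟨LK, hLK⟩ := hlip (fun v => k v ^ 2) (hkC.pow 2)
  have hP := fun i => hlip (fun v => q i v * k v) ((hqC i).mul hkC)
  choose LP hLP using hP
  have hmem : ∀ t, b t ∈ Metric.closedBall (0 : Fin p → ℝ) R := fun t => by
    simpa using lasso_bound hlam (hb t)
  have hobj : ∀ t v, lassoObj (fun i => e i + mulVec' (Xt t) β i) (Xt t) lam v
      = (n : ℝ)⁻¹ / 2 * ∑ i, (q i v - z t i * k v) ^ 2 + lam * l1 v := by
    intro t v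
    have : ∀ i, e i + mulVec' (Xt t) β i - mulVec' (Xt t) v i = q i v - z t i * k v := by
      intro i
      simp only [hq, hk, mulVec', dot, hXt, Finset.mul_sum]
      rw [add_sub_assoc, sub_sub, ← Finset.sum_sub_distrib, ← Finset.sum_add_distrib, sub_eq_add_neg,
        ← Finset.sum_neg_distrib]
      congr 1
      exact Finset.sum_congr rfl fun j _ => by ring
    simp only [lassoObj, l2_sq, this]
    congr 1
    rw [div_eq_mul_inv, mul_inv]; ring
  set C : ℝ := 2 * (n : ℝ)⁻¹ * (∑ i, Z * (2 * LP i + 2 * B * LK)) / c with hC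
  have hC0 : 0 ≤ C := by positivity
  refine ⟨C.toNNReal, LipschitzOnWith.of_dist_le_mul fun t ht t' ht' => ?_⟩
  rw [Real.coe_toNNReal C hC0, dist_eq_norm, Real.dist_eq]
  set d := ‖b t - b t'‖ with hd
  have hd0 : 0 ≤ d := norm_nonneg _
  have h1 : c * d ^ 2 ≤ (n : ℝ)⁻¹ * ∑ i, (mulVec' (Xt t) (fun j => b t' j - b t j) i) ^ 2 := by
    have h := rayleigh_lower (Xt t) _ c (hray t ht t' ht') (fun j => b t' j - b t j) (by
      intro j hj
      simp only [suppF, Finset.mem_union, Finset.mem_filter, Finset.mem_univ, true_and, not_or,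
        not_not] at hj
      simp [hj.1, hj.2])
    refine le_trans ?_ h
    gcongr
    have : d ≤ Real.sqrt (∑ j, (b t' j - b t j) ^ 2) := by
      refine (pi_norm_le_iff_of_nonneg (Real.sqrt_nonneg _)).2 fun j => ?_
      refine Real.le_sqrt_of_sq_le ?_
      have := Finset.single_le_sum (f := fun j => (b t' j - b t j) ^ 2)
        (fun _ _ => sq_nonneg _) (Finset.mem_univ j)
      refine le_trans (le_of_eq ?_) this
      rw [Real.norm_eq_abs, sq_abs, Pi.sub_apply]; ring
    calc d ^ 2 ≤ Real.sqrt (∑ j, (b t' j - b t j) ^ 2) ^ 2 := by gcongr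
      _ = _ := Real.sq_sqrt (Finset.sum_nonneg fun _ _ => sq_nonneg _)
  have h2 := lasso_growth hlam.le (hb t) (b t')
  have h3 := hb t' (b t)
  simp only [hobj] at h2 h3
  have h4 : (∑ i, (q i (b t') - z t i * k (b t')) ^ 2) - (∑ i, (q i (b t) - z t i * k (b t)) ^ 2)
      - (∑ i, (q i (b t') - z t' i * k (b t')) ^ 2) + (∑ i, (q i (b t) - z t' i * k (b t)) ^ 2)
      ≤ (∑ i, Z * (2 * LP i + 2 * B * LK)) * (|t - t'| * d) := by
    rw [← Finset.sum_sub_distrib, ← Finset.sum_sub_distrib, ← Finset.sum_add_distrib,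
      Finset.sum_mul]
    refine Finset.sum_le_sum fun i _ => ?_
    have hp : |q i (b t) * k (b t) - q i (b t') * k (b t')| ≤ LP i * d := by
      simpa [Real.dist_eq, dist_eq_norm] using! (hLP i).dist_le_mul _ (hmem t) _ (hmem t')
    have hkk : |k (b t) ^ 2 - k (b t') ^ 2| ≤ LK * d := by
      simpa [Real.dist_eq, dist_eq_norm] using! hLK.dist_le_mul _ (hmem t) _ (hmem t')
    have hzz : |z t i + z t' i| ≤ 2 * B :=
      (abs_add_le _ _).trans (by linarith [hB t i, hB t' i])
    have e1 : (q i (b t') - z t i * k (b t')) ^ 2 - (q i (b t) - z t i * k (b t)) ^ 2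
      - (q i (b t') - z t' i * k (b t')) ^ 2 + (q i (b t) - z t' i * k (b t)) ^ 2
      = (z t i - z t' i) * (2 * (q i (b t) * k (b t) - q i (b t') * k (b t'))
        - (z t i + z t' i) * (k (b t) ^ 2 - k (b t') ^ 2)) := by ring
    rw [e1]
    refine (le_abs_self _).trans ?_
    rw [abs_mul]
    calc |z t i - z t' i| * _ ≤ (Z * |t - t'|) * (2 * (LP i * d) + 2 * B * (LK * d)) := by
          refine mul_le_mul (hZ t t' i) ?_ (abs_nonneg _) (by positivity)
          refine (abs_sub _ _).trans ?_
          rw [abs_mul, abs_mul, abs_two]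
          gcongr
      _ = _ := by ring
  have hn0 : (0 : ℝ) ≤ (n : ℝ)⁻¹ := by positivity
  have h5 := mul_le_mul_of_nonneg_left h4 hn0
  have h6 : c * d ^ 2 ≤ 2 * (n : ℝ)⁻¹ * (∑ i, Z * (2 * LP i + 2 * B * LK)) * (|t - t'| * d) := by
    nlinarith
  have h7 : d * d ≤ (C * |t - t'|) * d := by
    have : c * (d * d) ≤ c * ((C * |t - t'|) * d) := by
      refine le_trans (le_of_eq (by ring)) (h6.trans (le_of_eq ?_))
      rw [hC]; field_simp
    exact le_of_mul_le_mul_left this hc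
  rcases hd0.eq_or_lt with h | h
  · rw [← h]; positivity
  · exact le_of_mul_le_mul_right h7 h

/-! ### Derivative of the path -/

/-- If `|f|` is differentiable at a zero of `f`, then `f' = 0` there: `|f|` has a minimum, so
`|f(s)| = o(s - t)`. -/
lemma deriv_zero_of_abs {f : ℝ → ℝ} {t : ℝ} (h0 : f t = 0)
    (ha : DifferentiableAt ℝ (fun s => |f s|) t) : HasDerivAt f 0 t := by
  have hmin : IsLocalMin (fun s => |f s|) t :=
    Filter.Eventually.of_forall fun s => by simp [h0]
  have h := ha.hasDerivAt
  rw [hmin.deriv_eq_zero] at h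
  rw [hasDerivAt_iff_isLittleO] at h ⊢
  simp only [h0, abs_zero, sub_zero, smul_zero] at h ⊢
  exact h.of_abs_left

/-- The derivative of the Lasso path at a point where it exists and vanishes off the active set:
differentiate the stationarity conditions, whose right-hand side is locally constant, and invert
the Gram matrix of the active columns. -/
lemma deriv_formula {n p : ℕ} (M : Fin n → Fin p → ℝ) (z : ℝ → Fin n → ℝ) (a0 β : Fin p → ℝ)
    (e : Fin n → ℝ) {lam : ℝ} (b : ℝ → Fin p → ℝ)
    (Xt : ℝ → Fin n → Fin p → ℝ) (hXt : ∀ t i j, Xt t i j = M i j + z t i * a0 j)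
    (hb : ∀ t, IsLasso (fun i => e i + mulVec' (Xt t) β i) (Xt t) lam (b t))
    (c : ℝ) (hc : 0 < c) (t : ℝ) (zd : Fin n → ℝ) (hzd : ∀ i, HasDerivAt (fun s => z s i) (zd i) t)
    (hray : c ≤ rayleighMin ((n : ℝ)⁻¹ • gramOf (Xt t)) (suppF (b t)))
    (d : Fin p → ℝ) (hd : ∀ j, HasDerivAt (fun s => b s j) (d j) t)
    (hd0 : ∀ j, b t j = 0 → d j = 0) (j : Fin p) :
    d j = ∑ i, DmatOf (Xt t) a0 β e (b t) i j * zd i := by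
  by_cases hj : j ∈ suppF (b t)
  swap
  · have : b t j = 0 := by simpa [suppF] using hj
    simp [DmatOf, hj, hd0 j this]
  have hXd : ∀ i k, HasDerivAt (fun s => Xt s i k) (zd i * a0 k) t := by
    intro i k
    simp only [hXt]
    exact ((hzd i).mul_const (a0 k)).const_add (M i k)
  have hXh : ∀ i, HasDerivAt (fun s => mulVec' (Xt s) (fun k => b s k - β k) i)
      (zd i * dot a0 (fun k => b t k - β k) + mulVec' (Xt t) d i) t := by
    intro i
    have := HasDerivAt.fun_sum (u := Finset.univ) fun k _ =>
      (hXd i k).fun_mul ((hd k).sub_const (β k))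
    convert! this using 1
    simp only [dot, mulVec', Finset.mul_sum, ← Finset.sum_add_distrib]
    exact Finset.sum_congr rfl fun k _ => by ring
  have hres : ∀ s i, e i + mulVec' (Xt s) β i - mulVec' (Xt s) (b s) i
      = e i - mulVec' (Xt s) (fun k => b s k - β k) i := by
    intro s i
    simp only [mulVec', mul_sub, Finset.sum_sub_distrib]
    ring
  have hsupp : ∀ k, k ∉ suppF (b t) → d k = 0 := fun k hk => hd0 k (by simpa [suppF] using hk)
  have hgram : ∀ l ∈ suppF (b t), ∑ i, Xt t i l * mulVec' (Xt t) d i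
      = ∑ i, (a0 l * (e i - mulVec' (Xt t) (fun k => b t k - β k) i)
        - Xt t i l * dot a0 (fun k => b t k - β k)) * zd i := by
    intro l hl
    have hl0 : b t l ≠ 0 := by simpa [suppF] using hl
    have hφ := (HasDerivAt.fun_sum (u := Finset.univ) fun i _ =>
      (hXd i l).fun_mul ((hXh i).const_sub (e i))).const_mul ((n : ℝ)⁻¹)
    have hconst : (fun s => (n : ℝ)⁻¹ * ∑ i, Xt s i l *
        (e i - mulVec' (Xt s) (fun k => b s k - β k) i))
        =ᶠ[nhds t] fun _ => lam * (SignType.sign (b t l) : ℝ) := by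
      have hcont := (hd l).continuousAt
      have hs : ∀ᶠ s in nhds t, b s l ≠ 0 ∧ SignType.sign (b s l) = SignType.sign (b t l) := by
        rcases lt_or_gt_of_ne hl0 with h | h
        · filter_upwards [hcont.eventually_lt_const h] with s hs
          exact ⟨hs.ne, by rw [sign_neg hs, sign_neg h]⟩
        · filter_upwards [hcont.eventually_const_lt h] with s hs
          exact ⟨hs.ne', by rw [sign_pos hs, sign_pos h]⟩
      filter_upwards [hs] with s hs
      have := lasso_kkt (hb s) hs.1
      simp only [hres] at this
      rw [this, hs.2]
    have hzero := hφ.unique ((hasDerivAt_const t _).congr_of_eventuallyEq hconst)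
    rcases Nat.eq_zero_or_pos n with rfl | hn
    · simp
    have hn' : (n : ℝ)⁻¹ ≠ 0 := by positivity
    have hz := (mul_eq_zero.1 hzero).resolve_left hn'
    rw [← sub_eq_zero, ← neg_eq_zero, ← hz, ← Finset.sum_sub_distrib, ← Finset.sum_neg_distrib]
    exact Finset.sum_congr rfl fun i _ => by ring
  set G := subMat (gramOf (Xt t)) (suppF (b t)) with hG
  have hext : ∀ (w : {x // x ∈ suppF (b t)} → ℝ) (i : Fin n),
      mulVec' (Xt t) (fun k => if hk : k ∈ suppF (b t) then w ⟨k, hk⟩ else 0) i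
        = ∑ k : {x // x ∈ suppF (b t)}, Xt t i k.1 * w k := by
    intro w i
    simp only [mulVec']
    rw [← Finset.sum_subset (Finset.subset_univ (suppF (b t)))
      (fun k _ hk => by simp [hk]), ← Finset.sum_coe_sort]
    exact Finset.sum_congr rfl fun k _ => by simp
  have hGv : ∀ (w : {x // x ∈ suppF (b t)} → ℝ) (l : {x // x ∈ suppF (b t)}),
      G.mulVec w l = ∑ i, Xt t i l.1 * ∑ k : {x // x ∈ suppF (b t)}, Xt t i k.1 * w k := by
    intro w l
    simp only [hG, Matrix.mulVec, dotProduct, subMat, gramOf, Matrix.of_apply, Finset.sum_mul,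
      Finset.mul_sum]
    rw [Finset.sum_comm]
    exact Finset.sum_congr rfl fun i _ => Finset.sum_congr rfl fun k _ => by ring
  have hunit : IsUnit G := by
    rw [← Matrix.mulVec_injective_iff_isUnit]
    refine (injective_iff_map_eq_zero (Matrix.mulVecLin G)).2 fun w hw => ?_
    have hw' : ∀ l, G.mulVec w l = 0 := fun l => congrFun hw l
    have hq : ∑ i, (∑ k : {x // x ∈ suppF (b t)}, Xt t i k.1 * w k) ^ 2 = 0 := by
      have : ∑ l, w l * G.mulVec w l = 0 := by simp [hw']
      have hswap : ∀ Y : Fin n → ℝ, ∑ l : {x // x ∈ suppF (b t)}, w l * ∑ i, Xt t i l.1 * Y i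
          = ∑ i, (∑ k : {x // x ∈ suppF (b t)}, Xt t i k.1 * w k) * Y i := by
        intro Y
        simp only [Finset.mul_sum, Finset.sum_mul]
        rw [Finset.sum_comm]
        exact Finset.sum_congr rfl fun i _ => Finset.sum_congr rfl fun k _ => by ring
      simp only [hGv] at this
      rw [hswap] at this
      simpa only [sq] using this
    have h := rayleigh_lower (Xt t) _ c hray
      (fun k => if hk : k ∈ suppF (b t) then w ⟨k, hk⟩ else 0) (fun k hk => by simp [hk])
    simp only [hext, hq, mul_zero] at h
    have h0 : ∑ k, (if hk : k ∈ suppF (b t) then w ⟨k, hk⟩ else 0) ^ 2 = 0 :=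
      le_antisymm (nonpos_of_mul_nonpos_right h hc) (Finset.sum_nonneg fun _ _ => sq_nonneg _)
    rw [Finset.sum_eq_zero_iff_of_nonneg (fun _ _ => sq_nonneg _)] at h0
    funext l
    have := h0 l.1 (Finset.mem_univ _)
    simpa using this
  have hdS : ∀ i, mulVec' (Xt t) d i
      = ∑ k : {x // x ∈ suppF (b t)}, Xt t i k.1 * (fun k : {x // x ∈ suppF (b t)} => d k.1) k := by
    intro i
    rw [← hext]
    congr 1
    funext k
    by_cases hk : k ∈ suppF (b t)
    · simp [hk]
    · simp [hk, hsupp k hk]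
  have hsol : G.mulVec (fun k => d k.1) = fun l => ∑ i, (a0 l.1 * (e i
      - mulVec' (Xt t) (fun k => b t k - β k) i)
        - Xt t i l.1 * dot a0 (fun k => b t k - β k)) * zd i := by
    funext l
    rw [← hgram l.1 l.2, hGv]
    simp only [hdS]
  have hinv : (fun k : {x // x ∈ suppF (b t)} => d k.1) = G⁻¹.mulVec (G.mulVec (fun k => d k.1)) := by
    rw [Matrix.mulVec_mulVec, Matrix.nonsing_inv_mul _ ((Matrix.isUnit_iff_isUnit_det _).1 hunit),
      Matrix.one_mulVec]
  have hfin := congrFun hinv ⟨j, hj⟩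
  rw [hsol] at hfin
  simp only [Matrix.mulVec, dotProduct, Finset.mul_sum] at hfin
  rw [hfin, Finset.sum_comm]
  refine Finset.sum_congr rfl fun i _ => ?_
  simp only [DmatOf, hj, dif_pos, Finset.sum_mul, ← hG]
  exact Finset.sum_congr rfl fun k _ => by ring

/-! ### Integral representation -/

/-- on the event `Ω₁`, almost surely, the difference of the Lasso path
endpoints is the integral of `D(t)ᵀ ż₀(t)` over `[0, π/2]`. -/
theorem statement_15
    (Ω : Type) [MeasureSpace Ω] [IsProbabilityMeasure (volume : Measure Ω)]
    (n p : ℕ) (σ lam : ℝ) (hσ : 0 < σ) (hlam : 0 < lam)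
    (Sig : Matrix (Fin p) (Fin p) ℝ) (β a0 : Fin p → ℝ)
    (X : Ω → Fin n → Fin p → ℝ) (eps g : Ω → Fin n → ℝ)
    (bpath : ℝ → Ω → Fin p → ℝ)
    (hSig : Sig.PosDef) (ha0 : a0 ≠ 0)
    (hX : GaussDesign n p Sig X)
    (heps : GaussNoise n σ eps)
    (hg : IsoGaussVec n (quadA0 Sig a0)⁻¹ g)
    (hXeps : IndepFun X eps)
    (hgind : IndepFun (fun ω => (X ω, eps ω)) g)
    (hpath : ∀ (t : ℝ) (ω : Ω), IsLasso
        (fun i => eps ω i + mulVec' (XPath (X ω) Sig a0 (eps ω) (g ω) t) β i)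
        (XPath (X ω) Sig a0 (eps ω) (g ω) t) lam (bpath t ω)) :
    ∀ᵐ ω ∂(volume : Measure Ω), ω ∈ OmegaOne X Sig a0 eps g bpath →
      ∀ j, bpath (Real.pi / 2) ω j - bpath 0 ω j =
        ∫ t in (0 : ℝ)..(Real.pi / 2),
          ∑ i, DmatOf (XPath (X ω) Sig a0 (eps ω) (g ω) t) a0 β (eps ω) (bpath t ω) i j
            * zdotPath (eps ω) (z0vec (X ω) Sig a0) (g ω) t i := by
  -- the identity holds at every point of the event
  refine Filter.Eventually.of_forall fun ω hω j => ?_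
  obtain ⟨c, hc, hray⟩ := hω
  set z0 := z0vec (X ω) Sig a0 with hz0
  set u := projPerp (eps ω) z0
  set w := projPerp (eps ω) (g ω)
  have hzd : ∀ t i, HasDerivAt (fun s => z0Path (eps ω) z0 (g ω) s i)
      (zdotPath (eps ω) z0 (g ω) t i) t := by
    intro t i
    have := (((Real.hasDerivAt_cos t).mul_const (u i)).const_add (projOn (eps ω) z0 i)).add
      ((Real.hasDerivAt_sin t).mul_const (w i))
    exact this
  set Z : ℝ := ∑ i, (|u i| + |w i|) with hZ
  have hZi : ∀ i, |u i| + |w i| ≤ Z := fun i =>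
    Finset.single_le_sum (f := fun i => |u i| + |w i|) (fun _ _ => by positivity)
      (Finset.mem_univ i)
  have hZ0 : 0 ≤ Z := Finset.sum_nonneg fun _ _ => by positivity
  have hZlip : ∀ s t i, |z0Path (eps ω) z0 (g ω) s i - z0Path (eps ω) z0 (g ω) t i|
      ≤ Z * |s - t| := by
    intro s t i
    have := Convex.norm_image_sub_le_of_norm_hasDerivWithin_le (C := Z) (s := Set.univ)
      (f := fun s => z0Path (eps ω) z0 (g ω) s i) (x := t) (y := s)
      (fun r _ => (hzd r i).hasDerivWithinAt) (fun r _ => ?_) convex_univ (Set.mem_univ _)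
      (Set.mem_univ _)
    · simpa using this
    · refine le_trans ?_ (hZi i)
      refine (abs_add_le _ _).trans ?_
      rw [abs_mul, abs_mul, abs_neg]
      gcongr
      · exact mul_le_of_le_one_left (abs_nonneg _) (Real.abs_sin_le_one r)
      · exact mul_le_of_le_one_left (abs_nonneg _) (Real.abs_cos_le_one r)
  set B : ℝ := (∑ i, |projOn (eps ω) z0 i|) + Z with hB
  have hB0 : 0 ≤ B := by positivity
  have hBt : ∀ t i, |z0Path (eps ω) z0 (g ω) t i| ≤ B := by
    intro t i
    have h1 : |projOn (eps ω) z0 i| ≤ ∑ i, |projOn (eps ω) z0 i| :=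
      Finset.single_le_sum (f := fun i => |projOn (eps ω) z0 i|) (fun _ _ => by positivity)
        (Finset.mem_univ i)
    have h2 : |Real.cos t * u i| ≤ |u i| := by
      rw [abs_mul]; exact mul_le_of_le_one_left (abs_nonneg _) (Real.abs_cos_le_one t)
    have h3 : |Real.sin t * w i| ≤ |w i| := by
      rw [abs_mul]; exact mul_le_of_le_one_left (abs_nonneg _) (Real.abs_sin_le_one t)
    have h4 := hZi i
    refine (abs_add_three _ _ _).trans ?_
    linarith
  obtain ⟨C, hC⟩ := lasso_lipschitz (fun i j => X ω i j - z0 i * a0 j)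
    (z0Path (eps ω) z0 (g ω)) a0 β (eps ω) hlam (fun t => bpath t ω) Z B hB0 hZ0 hZlip hBt
    (fun t => XPath (X ω) Sig a0 (eps ω) (g ω) t) (fun _ _ _ => rfl) (fun t => hpath t ω) c hc hray
  have hpi : (0 : ℝ) ≤ Real.pi / 2 := by positivity
  have hsub : Set.uIcc 0 (Real.pi / 2) ⊆ Set.Ici (0 : ℝ) := by
    rw [Set.uIcc_of_le hpi]; exact Set.Icc_subset_Ici_self
  have hCk : ∀ k, LipschitzOnWith C (fun t => bpath t ω k) (Set.uIcc 0 (Real.pi / 2)) := by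
    intro k
    have := (LipschitzWith.eval (α := fun _ : Fin p => ℝ) k).comp_lipschitzOnWith (hC.mono hsub)
    simpa using! this
  have hac := fun k => (hCk k).absolutelyContinuousOnInterval
  have hacabs : ∀ k, AbsolutelyContinuousOnInterval (fun t => |bpath t ω k|) 0 (Real.pi / 2) := by
    intro k
    have : LipschitzOnWith (1 * C) (fun t => |bpath t ω k|) (Set.uIcc 0 (Real.pi / 2)) :=
      (lipschitzWith_one_norm (E := ℝ)).comp_lipschitzOnWith (hCk k)
    exact this.absolutelyContinuousOnInterval
  rw [← (hac j).integral_deriv_eq_sub]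
  refine intervalIntegral.integral_congr_ae ?_
  have hae1 := ae_all_iff.2 fun k => (hac k).ae_differentiableAt
  have hae2 := ae_all_iff.2 fun k => (hacabs k).ae_differentiableAt
  filter_upwards [hae1, hae2] with t h1 h2 ht
  have ht' := Set.uIoc_subset_uIcc ht
  have ht0 : 0 ≤ t := hsub ht'
  refine deriv_formula (fun i j => X ω i j - z0 i * a0 j)
    (z0Path (eps ω) z0 (g ω)) a0 β (eps ω) (fun t => bpath t ω)
    (fun t => XPath (X ω) Sig a0 (eps ω) (g ω) t) (fun _ _ _ => rfl) (fun t => hpath t ω) c hc t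
    (zdotPath (eps ω) z0 (g ω) t) (hzd t) ?_ (fun k => deriv (fun s => bpath s ω k) t)
    (fun k => (h1 k ht').hasDerivAt) ?_ j
  · simpa using hray t ht0 t ht0
  · intro k hk
    exact (deriv_zero_of_abs (f := fun s => bpath s ω k) hk (h2 k ht')).deriv

end BZ
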